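/- arXiv:1601.04001 — 9 statements merged into one kernel-verified Lean document; each statement's English description precedes it below -/
import Mathlib

section
/- Let F : E → E be locally Lipschitz, let x_n, x_{n−1}, y_{n−1} ∈ E, and let λ_{n−1} > 0, λ_max > 0, α > 0, σ ∈ (0,1), θ_{n−1} ≥ 0. Then there exists i ∈ ℕ such that, setting θ = σ^i, y = x_n + θ·(x_n − x_{n−1}), and λ = θ·λ_{n−1}, one has λ ≤ min( ((1+θ_{n−1})/θ)·λ_{n−1}, λ_max ) and ‖λ·F(y) − λ_{n−1}·θ·F(y_{n−1})‖ ≤ α·‖y − y_{n−1}‖. (That is, the linesearch of Algorithm 1 always terminates.) -/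
open scoped RealInnerProductSpace

/-!
The right-hand side `α ‖y - yₙ₋₁‖` of the linesearch test may itself tend to zero as `θ → 0`, but
`F y - F yₙ₋₁ = O(y - yₙ₋₁)` as `y → xₙ` in every case: if `yₙ₋₁ = xₙ` this is the Lipschitz bound
at `xₙ`, and if `yₙ₋₁ ≠ xₙ` the left side is bounded while the right side stays away from zero. The
factor `θ λₙ₋₁ → 0` turns this `O` into `o`, so the test holds for all sufficiently small `θ > 0`,
whatever the value of `α > 0`.
-/

section

open Filter Asymptotics
open scoped Topology

theorem isBigO_sub_of_locallyLipschitz {E G : Type*} [SeminormedAddCommGroup E]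
    [SeminormedAddCommGroup G] {F : E → G} (hF : LocallyLipschitz F) (x : E) :
    (fun y ↦ F y - F x) =O[𝓝 x] fun y ↦ y - x := by
  obtain ⟨K, t, ht, hK⟩ := hF x
  refine .of_bound K ?_
  filter_upwards [ht] with y hy
  exact hK.norm_sub_le hy (mem_of_mem_nhds ht)

theorem isBigO_one_of_tendsto_ne_zero {ι E : Type*} [NormedAddCommGroup E] {l : Filter ι}
    {f : ι → E} {c : E} (hf : Tendsto f l (𝓝 c)) (hc : c ≠ 0) :
    (fun _ ↦ (1 : ℝ)) =O[l] f :=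
  (isBigO_const_left_iff_pos_le_norm one_ne_zero).2
    ⟨‖c‖ / 2, half_pos (norm_pos_iff.2 hc),
      hf.norm.eventually_const_le (half_lt_self (norm_pos_iff.2 hc))⟩

theorem isBigO_sub_const_of_isBigO_sub_nhds {E G : Type*} [NormedAddCommGroup E]
    [SeminormedAddCommGroup G] {F : E → G} {x : E}
    (hF : (fun y ↦ F y - F x) =O[𝓝 x] fun y ↦ y - x) (z : E) :
    (fun y ↦ F y - F z) =O[𝓝 x] fun y ↦ y - z := by
  obtain rfl | hzx := eq_or_ne z x
  · exact hF
  have tendsto_sub (w : E) : Tendsto (fun y ↦ y - w) (𝓝 x) (𝓝 (x - w)) :=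
    tendsto_id.sub_const w
  have bounded : (fun y ↦ F y - F z) =O[𝓝 x] fun _ ↦ (1 : ℝ) := by
    have hFx : (fun y ↦ F y - F x) =O[𝓝 x] fun _ ↦ (1 : ℝ) :=
      hF.trans_tendsto_nhds ℝ (tendsto_sub x)
    simpa only [sub_add_sub_cancel] using
      hFx.add (isBigO_const_const (F x - F z) one_ne_zero (𝓝 x))
  exact bounded.trans (isBigO_one_of_tendsto_ne_zero (tendsto_sub z) (sub_ne_zero.2 hzx.symm))

theorem eventually_norm_smul_sub_smul_le {ι 𝕜 E G : Type*} [NormedField 𝕜]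
    [NormedAddCommGroup E] [SeminormedAddCommGroup G] [NormedSpace 𝕜 G] {F : E → G} {x : E}
    (hF : (fun y ↦ F y - F x) =O[𝓝 x] fun y ↦ y - x) (z : E) {l : Filter ι} {t : ι → 𝕜}
    {y : ι → E} (ht : Tendsto t l (𝓝 0)) (hy : Tendsto y l (𝓝 x)) {α : ℝ} (hα : 0 < α) :
    ∀ᶠ i in l, ‖t i • F (y i) - t i • F z‖ ≤ α * ‖y i - z‖ := by
  have hFz : (fun i ↦ F (y i) - F z) =O[l] fun i ↦ y i - z :=
    (isBigO_sub_const_of_isBigO_sub_nhds hF z).comp_tendsto hy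
  have hsmul : (fun i ↦ t i • (F (y i) - F z)) =o[l] fun i ↦ y i - z := by
    simpa only [one_smul, isLittleO_norm_right] using
      ((isLittleO_one_iff ℝ).2 ht).smul_isBigO hFz.norm_right
  simpa only [smul_sub] using hsmul.bound hα

theorem eventually_nhdsGT_zero_le_div {𝕜 : Type*} [Field 𝕜] [LinearOrder 𝕜] [IsStrictOrderedRing 𝕜]
    [TopologicalSpace 𝕜] [OrderTopology 𝕜] {c : 𝕜} (hc : 0 < c) :
    ∀ᶠ θ in 𝓝[>] (0 : 𝕜), θ ≤ c / θ := by
  have hdiv : Tendsto (fun θ : 𝕜 ↦ c / θ) (𝓝[>] 0) atTop := by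
    simpa only [div_eq_mul_inv] using tendsto_inv_nhdsGT_zero.const_mul_atTop hc
  have hid : Tendsto id (𝓝[>] (0 : 𝕜)) (𝓝 0) := nhdsWithin_le_nhds
  filter_upwards [hid.eventually_le_const one_pos, hdiv.eventually_ge_atTop 1] with θ hθ hcθ
  exact hθ.trans hcθ

theorem linesearch_alg1_terminates_general {E G : Type*} [NormedAddCommGroup E] [NormedSpace ℝ E]
    [SeminormedAddCommGroup G] [NormedSpace ℝ G] {F : E → G} {xn : E}
    (hF : (fun y ↦ F y - F xn) =O[𝓝 xn] fun y ↦ y - xn) (d ynm1 : E)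
    {lamm1 lamMax α θm1 : ℝ} (hlam : 0 ≤ lamm1) (hmax : 0 < lamMax) (hα : 0 < α)
    (hθ : -1 < θm1) :
    ∀ᶠ θ in 𝓝[>] (0 : ℝ),
      θ * lamm1 ≤ min ((1 + θm1) / θ * lamm1) lamMax ∧
      ‖(θ * lamm1) • F (xn + θ • d) - (lamm1 * θ) • F ynm1‖ ≤ α * ‖xn + θ • d - ynm1‖ := by
  have hstep : Tendsto (fun θ ↦ θ * lamm1) (𝓝[>] (0 : ℝ)) (𝓝 0) :=
    ((continuous_mul_const lamm1).tendsto' 0 0 (zero_mul lamm1)).mono_left nhdsWithin_le_nhds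
  have hpoint : Tendsto (fun θ : ℝ ↦ xn + θ • d) (𝓝[>] 0) (𝓝 xn) :=
    (Continuous.tendsto' (by fun_prop) 0 xn (by simp)).mono_left nhdsWithin_le_nhds
  filter_upwards [eventually_nhdsGT_zero_le_div (neg_lt_iff_pos_add'.1 hθ),
    hstep.eventually_le_const hmax,
    eventually_norm_smul_sub_smul_le hF ynm1 hstep hpoint hα] with θ hdiv hle hnorm
  rw [mul_comm lamm1 θ]
  exact ⟨le_min (mul_le_mul_of_nonneg_right hdiv hlam) hle, hnorm⟩

end

/-- The linesearch of Algorithm 1 always terminates. -/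
theorem linesearch_alg1_terminates
    {E : Type*} [NormedAddCommGroup E] [InnerProductSpace ℝ E] [FiniteDimensional ℝ E]
    (F : E → E) (hF : LocallyLipschitz F)
    (xn xnm1 ynm1 : E) (lamm1 lamMax α σ θm1 : ℝ)
    (hlam : 0 < lamm1) (hmax : 0 < lamMax) (hα : 0 < α)
    (hσ : σ ∈ Set.Ioo (0 : ℝ) 1) (hθ : 0 ≤ θm1) :
    ∃ i : ℕ,
      σ ^ i * lamm1 ≤ min ((1 + θm1) / σ ^ i * lamm1) lamMax ∧
      ‖(σ ^ i * lamm1) • F (xn + σ ^ i • (xn - xnm1)) - (lamm1 * σ ^ i) • F ynm1‖ ≤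
        α * ‖xn + σ ^ i • (xn - xnm1) - ynm1‖ := by
  have hpow := tendsto_pow_atTop_nhdsWithin_zero_of_lt_one hσ.1 hσ.2
  exact (hpow.eventually (linesearch_alg1_terminates_general (isBigO_sub_of_locallyLipschitz hF xn)
    (xn - xnm1) ynm1 hlam.le hmax hα (neg_one_lt_zero.trans_le hθ))).exists
end

section
/- Let C ⊆ E be a nonempty closed convex set, F : E → E any map, α ≥ 0, λ_n, λ_{n−1} > 0, θ_n ≥ 0, and points x_{n−1}, x_n, x_{n+1}, y_{n−1}, y_n ∈ E. Assume: x_{n−1} ∈ C; x_n is the point of C closest to x_{n−1} − λ_{n−1}·F(y_{n−1}); y_n = x_n + θ_n·(x_n − x_{n−1}); x_{n+1} is the point of C closest to x_n − λ_n·F(y_n); and ‖λ_n·F(y_n) − λ_{n−1}·θ_n·F(y_{n−1})‖ ≤ α·‖y_n − y_{n−1}‖. Then for every x ∈ C: ‖x_{n+1} − x‖² ≤ ‖x_n − x‖² + 2α·‖y_n − y_{n−1}‖·‖x_{n+1} − y_n‖ − ‖y_n − x_n‖² − ‖x_{n+1} − y_n‖² − 2·λ_n·⟪F(y_n), y_n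 − x⟫. -/
open scoped RealInnerProductSpace

/-!
The optimality of `xnp1` gives a three-point inequality, which is split at the extrapolated point
`yn`; this leaves the cross term `⟪lamn • F yn + (yn - xn), xnp1 - yn⟫`. The vector
`(lamm1 * θn) • F ynm1 + (yn - xn)` is `-θn` times the residual `xnm1 - lamm1 • F ynm1 - xn` of the
previous projection, and testing the optimality of `xn` at both `xnp1` and `xnm1` shows that its
inner product with `xnp1 - yn` is nonnegative. Subtracting it, what remains of the cross term is
controlled by Cauchy–Schwarz and the step-size rule.
-/

section

variable {E : Type*} [NormedAddCommGroup E] [InnerProductSpace ℝ E]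

theorem inner_sub_sub_nonpos_of_forall_norm_sub_le {C : Set E} (hC : Convex ℝ C) {w p z : E}
    (hp : p ∈ C) (hmin : ∀ y ∈ C, ‖p - w‖ ≤ ‖y - w‖) (hz : z ∈ C) : ⟪w - p, z - p⟫ ≤ 0 := by
  have hmin' : IsMinOn (fun y ↦ ‖w - y‖) C p :=
    isMinOn_iff.2 fun y hy ↦ by simpa only [norm_sub_rev w] using hmin y hy
  exact (norm_eq_iInf_iff_real_inner_le_zero hC hp).1 (hmin'.iInf_eq hp).symm z hz

theorem norm_sub_sq_le_of_inner_sub_sub_nonpos {x g p z : E} (h : ⟪x - g - p, z - p⟫ ≤ 0) :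
    ‖p - z‖ ^ 2 ≤ ‖x - z‖ ^ 2 - ‖p - x‖ ^ 2 - 2 * ⟪g, p - z⟫ := by
  have hsq : ‖x - z‖ ^ 2 = ‖p - x‖ ^ 2 + 2 * ⟪x - p, p - z⟫ + ‖p - z‖ ^ 2 := by
    rw [← sub_add_sub_cancel x p z, norm_add_sq_real, norm_sub_rev x p]
  have hinner : ⟪x - g - p, z - p⟫ = ⟪g, p - z⟫ - ⟪x - p, p - z⟫ := by
    rw [← inner_sub_left, ← inner_neg_neg]
    congr 1 <;> abel
  linarith

theorem norm_sub_sq_le_of_inner_sub_sub_nonpos_split {x g p z : E}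
    (h : ⟪x - g - p, z - p⟫ ≤ 0) (y : E) :
    ‖p - z‖ ^ 2 ≤ ‖x - z‖ ^ 2 - ‖y - x‖ ^ 2 - ‖p - y‖ ^ 2 - 2 * ⟪g, y - z⟫
      - 2 * ⟪g + (y - x), p - y⟫ := by
  have hsq : ‖p - x‖ ^ 2 = ‖p - y‖ ^ 2 + 2 * ⟪y - x, p - y⟫ + ‖y - x‖ ^ 2 := by
    rw [← sub_add_sub_cancel p y x, norm_add_sq_real, real_inner_comm]
  have hinner : ⟪g, p - z⟫ = ⟪g, p - y⟫ + ⟪g, y - z⟫ := by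
    rw [← inner_add_right, sub_add_sub_cancel]
  rw [inner_add_left]
  linarith [norm_sub_sq_le_of_inner_sub_sub_nonpos h]

theorem inner_smul_add_extrapolation_nonneg {x x' g y p : E} {θ : ℝ} (hθ : 0 ≤ θ)
    (hy : y = x + θ • (x - x')) (hp : ⟪x' - g - x, p - x⟫ ≤ 0)
    (hx' : ⟪x' - g - x, x' - x⟫ ≤ 0) : 0 ≤ ⟪θ • g + (y - x), p - y⟫ := by
  have hleft : θ • g + (y - x) = -(θ • (x' - g - x)) := by rw [hy]; module
  have hright : p - y = (p - x) + θ • (x' - x) := by rw [hy]; module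
  rw [hleft, hright, inner_neg_left, real_inner_smul_left, inner_add_right, real_inner_smul_right]
  have hsum : ⟪x' - g - x, p - x⟫ + θ * ⟪x' - g - x, x' - x⟫ ≤ 0 :=
    add_nonpos hp (mul_nonpos_of_nonneg_of_nonpos hθ hx')
  exact neg_nonneg.2 (mul_nonpos_of_nonneg_of_nonpos hθ hsum)

theorem neg_inner_add_le_norm_sub_mul_norm {a b d u : E} (h : 0 ≤ ⟪b + d, u⟫) :
    -⟪a + d, u⟫ ≤ ‖a - b‖ * ‖u‖ :=
  calc
    -⟪a + d, u⟫ ≤ ⟪b + d, u⟫ - ⟪a + d, u⟫ := by linarith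
    _ = ⟪b - a, u⟫ := by rw [← inner_sub_left, add_sub_add_right_eq_sub]
    _ ≤ ‖a - b‖ * ‖u‖ := norm_sub_rev a b ▸ real_inner_le_norm _ _

theorem basic_lemma_alg1_general {C : Set E} (hCcv : Convex ℝ C) {F : E → E}
    {α lamn lamm1 θn : ℝ} (hθn : 0 ≤ θn) {xnm1 xn xnp1 ynm1 yn : E}
    (hxm1C : xnm1 ∈ C) (hxnC : xn ∈ C)
    (hxn : ∀ z ∈ C, ‖xn - (xnm1 - lamm1 • F ynm1)‖ ≤ ‖z - (xnm1 - lamm1 • F ynm1)‖)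
    (hyn : yn = xn + θn • (xn - xnm1)) (hxnp1C : xnp1 ∈ C)
    (hxnp1 : ∀ z ∈ C, ‖xnp1 - (xn - lamn • F yn)‖ ≤ ‖z - (xn - lamn • F yn)‖)
    (hls : ‖lamn • F yn - (lamm1 * θn) • F ynm1‖ ≤ α * ‖yn - ynm1‖) {x : E} (hx : x ∈ C) :
    ‖xnp1 - x‖ ^ 2 ≤ ‖xn - x‖ ^ 2 + 2 * α * ‖yn - ynm1‖ * ‖xnp1 - yn‖
      - ‖yn - xn‖ ^ 2 - ‖xnp1 - yn‖ ^ 2 - 2 * lamn * ⟪F yn, yn - x⟫ := by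
  have hstep := norm_sub_sq_le_of_inner_sub_sub_nonpos_split
    (inner_sub_sub_nonpos_of_forall_norm_sub_le hCcv hxnp1C hxnp1 hx) yn
  have hextra : 0 ≤ ⟪(lamm1 * θn) • F ynm1 + (yn - xn), xnp1 - yn⟫ := by
    rw [mul_comm, mul_smul]
    exact inner_smul_add_extrapolation_nonneg hθn hyn
      (inner_sub_sub_nonpos_of_forall_norm_sub_le hCcv hxnC hxn hxnp1C)
      (inner_sub_sub_nonpos_of_forall_norm_sub_le hCcv hxnC hxn hxm1C)
  have hcross : -⟪lamn • F yn + (yn - xn), xnp1 - yn⟫ ≤ α * ‖yn - ynm1‖ * ‖xnp1 - yn‖ :=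
    (neg_inner_add_le_norm_sub_mul_norm hextra).trans (by gcongr)
  rw [real_inner_smul_left] at hstep
  linarith

end

/-- Basic inequality for Algorithm 1 (Lemma 2.4 of the paper). -/
theorem basic_lemma_alg1
    {E : Type*} [NormedAddCommGroup E] [InnerProductSpace ℝ E] [FiniteDimensional ℝ E]
    (C : Set E) (hCne : C.Nonempty) (hCcl : IsClosed C) (hCcv : Convex ℝ C)
    (F : E → E) (α lamn lamm1 θn : ℝ)
    (hα : 0 ≤ α) (hlamn : 0 < lamn) (hlamm1 : 0 < lamm1) (hθn : 0 ≤ θn)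
    (xnm1 xn xnp1 ynm1 yn : E)
    (hxm1C : xnm1 ∈ C)
    (hxnC : xn ∈ C)
    (hxn : ∀ z ∈ C, ‖xn - (xnm1 - lamm1 • F ynm1)‖ ≤ ‖z - (xnm1 - lamm1 • F ynm1)‖)
    (hyn : yn = xn + θn • (xn - xnm1))
    (hxnp1C : xnp1 ∈ C)
    (hxnp1 : ∀ z ∈ C, ‖xnp1 - (xn - lamn • F yn)‖ ≤ ‖z - (xn - lamn • F yn)‖)
    (hls : ‖lamn • F yn - (lamm1 * θn) • F ynm1‖ ≤ α * ‖yn - ynm1‖) :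
    ∀ x ∈ C,
      ‖xnp1 - x‖ ^ 2 ≤ ‖xn - x‖ ^ 2 + 2 * α * ‖yn - ynm1‖ * ‖xnp1 - yn‖
        - ‖yn - xn‖ ^ 2 - ‖xnp1 - yn‖ ^ 2 - 2 * lamn * ⟪F yn, yn - x⟫ :=
  fun _ hx ↦ basic_lemma_alg1_general hCcv hθn hxm1C hxnC hxn hyn hxnp1C hxnp1 hls hx
end

section
/- Let F : E → E be locally Lipschitz, let x_n, x_{n−1}, y_{n−1} ∈ E, and let λ_{n−1} > 0, α > 0, σ ∈ (0,1), and θ_{n−1} with 0 < θ_{n−1} ≤ (1+√5)/2. Then there exists i ∈ ℕ such that, setting θ = √(1+θ_{n−1})·σ^i, y = x_n + θ·(x_n − x_{n−1}), and λ = θ·λ_{n−1}, one has λ·‖F(y) − F(y_{n−1})‖ ≤ α·‖y − y_{n−1}‖. (That is, the linesearch of Algorithm 2 always terminates.) -/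
open scoped RealInnerProductSpace

/-!
Seen from a fixed point `z`, a map `F` that is Lipschitz near `x` satisfies
`dist (F y) (F z) = O(dist y z)` as `y → x`: if `x = z` this is the Lipschitz bound, and otherwise
the right-hand side stays away from `0` while the left-hand side stays bounded. The trial points
converge to `xn` while the trial steps tend to `0`, so the left-hand side of the linesearch test is
little-o of `‖y - ynm1‖` and drops below `α * ‖y - ynm1‖`.
-/

open Asymptotics Filter
open scoped NNReal Topology

section LipschitzNear

variable {X Y : Type*} [PseudoMetricSpace X] [PseudoMetricSpace Y] {F : X → Y} {K : ℝ≥0}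
  {s : Set X} {x : X}

theorem isBigO_dist_of_lipschitzOnWith (hF : LipschitzOnWith K F s) (hs : s ∈ 𝓝 x) (z : X) :
    (fun y => dist (F y) (F z)) =O[𝓝 x] fun y => dist y z := by
  by_cases hxz : dist x z = 0
  · have hz : z ∈ s := mem_of_mem_nhds ((Metric.inseparable_iff.2 hxz).nhds_eq ▸ hs)
    refine .of_bound K ?_
    filter_upwards [hs] with y hy
    simpa only [Real.norm_of_nonneg dist_nonneg] using hF.dist_le_mul y hy z hz
  · have hcont : ContinuousAt (fun y => dist (F y) (F z)) x :=
      (hF.continuousOn.continuousAt hs).dist continuousAt_const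
    have hbdd : (fun y => dist (F y) (F z)) =O[𝓝 x] fun _ => dist x z :=
      hcont.norm.isBoundedUnder_le.isBigO_const hxz
    have haway : (fun _ => dist x z) =O[𝓝 x] fun y => dist y z :=
      ((isEquivalent_const_iff_tendsto hxz).2 (tendsto_id.dist tendsto_const_nhds)).isBigO_symm
    exact hbdd.trans haway

theorem isLittleO_mul_dist_of_lipschitzOnWith (hF : LipschitzOnWith K F s) (hs : s ∈ 𝓝 x) (z : X)
    {ι : Type*} {l : Filter ι} {u : ι → X} {t : ι → ℝ} (hu : Tendsto u l (𝓝 x))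
    (ht : Tendsto t l (𝓝 0)) :
    (fun i => t i * dist (F (u i)) (F z)) =o[l] fun i => dist (u i) z := by
  simpa only [one_mul, Function.comp_def] using ((isLittleO_one_iff ℝ).2 ht).mul_isBigO
    ((isBigO_dist_of_lipschitzOnWith hF hs z).comp_tendsto hu)

end LipschitzNear

theorem linesearch_alg2_terminates_general
    {E G : Type*} [SeminormedAddCommGroup E] [NormedSpace ℝ E] [SeminormedAddCommGroup G]
    {F : E → G} {K : ℝ≥0} {s : Set E} {xn : E} (hF : LipschitzOnWith K F s) (hs : s ∈ 𝓝 xn)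
    (xnm1 ynm1 : E) (c lamm1 : ℝ) {α σ : ℝ} (hα : 0 < α) (hσ : |σ| < 1) :
    ∀ᶠ i : ℕ in atTop,
      (c * σ ^ i * lamm1) * ‖F (xn + (c * σ ^ i) • (xn - xnm1)) - F ynm1‖ ≤
        α * ‖xn + (c * σ ^ i) • (xn - xnm1) - ynm1‖ := by
  have hθ : Tendsto (fun i : ℕ => c * σ ^ i) atTop (𝓝 0) := by
    simpa only [mul_zero] using (tendsto_pow_atTop_nhds_zero_of_abs_lt_one hσ).const_mul c
  have hstep : Tendsto (fun i : ℕ => c * σ ^ i * lamm1) atTop (𝓝 0) := by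
    simpa only [zero_mul] using hθ.mul_const lamm1
  have hy : Tendsto (fun i : ℕ => xn + (c * σ ^ i) • (xn - xnm1)) atTop (𝓝 xn) := by
    simpa only [zero_smul, add_zero] using (hθ.smul_const (xn - xnm1)).const_add xn
  filter_upwards [(isLittleO_mul_dist_of_lipschitzOnWith hF hs ynm1 hy hstep).def hα] with i hi
  simpa only [dist_eq_norm, norm_norm] using (Real.le_norm_self _).trans hi

/-- The linesearch of Algorithm 2 always terminates. -/
theorem linesearch_alg2_terminates
    {E : Type*} [NormedAddCommGroup E] [InnerProductSpace ℝ E] [FiniteDimensional ℝ E]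
    (F : E → E) (hF : LocallyLipschitz F)
    (xn xnm1 ynm1 : E) (lamm1 α σ θm1 : ℝ)
    (hlam : 0 < lamm1) (hα : 0 < α) (hσ : σ ∈ Set.Ioo (0 : ℝ) 1)
    (hθ1 : 0 < θm1) (hθ2 : θm1 ≤ (1 + Real.sqrt 5) / 2) :
    ∃ i : ℕ,
      (Real.sqrt (1 + θm1) * σ ^ i * lamm1) *
          ‖F (xn + (Real.sqrt (1 + θm1) * σ ^ i) • (xn - xnm1)) - F ynm1‖ ≤
        α * ‖xn + (Real.sqrt (1 + θm1) * σ ^ i) • (xn - xnm1) - ynm1‖ := by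
  obtain ⟨K, s, hs, hK⟩ := hF xn
  exact (linesearch_alg2_terminates_general hK hs xnm1 ynm1 (Real.sqrt (1 + θm1)) lamm1 hα
    ((abs_of_pos hσ.1).trans_lt hσ.2)).exists
end

section
/- Let F : E → E be any map, g : E → ℝ convex, α ≥ 0, λ_{n−1} > 0, θ_n > 0, and set λ_n = θ_n·λ_{n−1}. Let x_{n−1}, x_n, x_{n+1}, y_{n−1}, y_n ∈ E satisfy: y_n = x_n + θ_n·(x_n − x_{n−1}); x_n is the minimizer over E of z ↦ λ_{n−1}·g(z) + (1/2)·‖z − (x_{n−1} − λ_{n−1}·F(y_{n−1}))‖²; x_{n+1} is the minimizer over E of z ↦ λ_n·g(z) + (1/2)·‖z − (x_n − λ_n·F(y_n))‖²; and λ_n·‖F(y_n) − F(y_{n−1})‖ ≤ α·‖y_n − y_{n−1}‖. Then for every x ∈ E: ‖x_{n+1} − x‖² ≤ ‖x_n − x‖² − ‖y_n − x_n‖² − ‖x_{n+1} − y_n‖² + 2α·‖y_n − y_{n−1}‖·‖x_{n+1} − y_n‖ − 2·λ_n·((1+θ_n)·g(x_n) − θ_n·g(x_{n−1}) − g(x))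 − 2·λ_n·⟪F(y_n), y_n − x⟫. -/
open scoped RealInnerProductSpace

/-!
Both iterates are proximal points, so each satisfies a variational inequality. The one for `xₙ`,
tested at `xₙ₊₁` and `xₙ₋₁` with weights `1` and `θₙ`, becomes an inequality in the direction
`xₙ₊₁ - yₙ`, because `xₙ₊₁ - yₙ = (xₙ₊₁ - xₙ) + θₙ (xₙ₋₁ - xₙ)`; scaling it by `θₙ` replaces `λₙ₋₁`
by `λₙ` and `xₙ - xₙ₋₁` by `yₙ - xₙ`. Adding the one for `xₙ₊₁`, tested at `x`, leaves
`F yₙ₋₁ - F yₙ` paired with `xₙ₊₁ - yₙ`, which the step-size condition controls.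
-/

open Filter Topology

section UniformConvexity

variable {E : Type*} [NormedAddCommGroup E] [NormedSpace ℝ E]

theorem add_modulus_le_of_isMinOn {s : Set E} {φ : ℝ → ℝ} {f : E → ℝ} {p z : E}
    (hf : UniformConvexOn s φ f) (hmin : IsMinOn f s p) (hp : p ∈ s) (hz : z ∈ s) :
    f p + φ ‖p - z‖ ≤ f z := by
  have segment_bound : ∀ t ∈ Set.Ioo (0 : ℝ) 1, f p + (1 - t) * φ ‖p - z‖ ≤ f z := by
    rintro t ⟨ht₀, ht₁⟩
    have hle : f p ≤ f ((1 - t) • p + t • z) :=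
      hmin (hf.1 hp hz (sub_nonneg.2 ht₁.le) ht₀.le (sub_add_cancel 1 t))
    have hconv := hf.2 hp hz (sub_nonneg.2 ht₁.le) ht₀.le (sub_add_cancel 1 t)
    simp only [smul_eq_mul] at hconv
    refine le_of_mul_le_mul_left ?_ ht₀
    linarith
  have hlim : Tendsto (fun t : ℝ ↦ f p + (1 - t) * φ ‖p - z‖) (𝓝[>] 0) (𝓝 (f p + φ ‖p - z‖)) := by
    have hcont : Continuous fun t : ℝ ↦ f p + (1 - t) * φ ‖p - z‖ := by fun_prop
    simpa using (hcont.tendsto 0).mono_left nhdsWithin_le_nhds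
  exact le_of_tendsto hlim (eventually_of_mem (Ioo_mem_nhdsGT one_pos) segment_bound)

end UniformConvexity

section ProximalPoint

variable {E : Type*} [NormedAddCommGroup E] [InnerProductSpace ℝ E]

theorem two_mul_inner_sub_sub (a b c : E) :
    2 * ⟪b - a, c - b⟫ = ‖c - a‖ ^ 2 - ‖b - a‖ ^ 2 - ‖c - b‖ ^ 2 := by
  rw [← sub_add_sub_cancel' b a c, norm_add_sq_real]
  ring

theorem strongConvexOn_add_half_norm_sub_sq {s : Set E} {f : E → ℝ} (hf : ConvexOn ℝ s f) (w : E) :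
    StrongConvexOn s 1 fun z ↦ f z + 1 / 2 * ‖z - w‖ ^ 2 := by
  have hlin : ConvexOn ℝ s fun z ↦ -⟪w, z⟫ := (-(innerₛₗ ℝ w)).convexOn hf.1
  have haffine := (hf.add hlin).add_const (1 / 2 * ‖w‖ ^ 2)
  refine strongConvexOn_iff_convex.2 (haffine.congr fun z _ ↦ ?_)
  simp only [Pi.add_apply, norm_sub_sq_real, real_inner_comm w z]
  ring

/-- `IsProx s f w p` says that `p` is a proximal point of `w` for `f` restricted to `s`. Restricting
to `s` encodes the extended-valued function equal to `f` on `s` and to `+∞` elsewhere; the paper's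
`prox_{λg}(w)` is the case `s = Set.univ`, `f = λ • g`. -/
def IsProx (s : Set E) (f : E → ℝ) (w p : E) : Prop :=
  p ∈ s ∧ IsMinOn (fun z ↦ f z + 1 / 2 * ‖z - w‖ ^ 2) s p

namespace IsProx

variable {s : Set E} {f : E → ℝ} {w p z : E}

theorem sub_le_inner (hp : IsProx s f w p) (hf : ConvexOn ℝ s f) (hz : z ∈ s) :
    f p - f z ≤ ⟪p - w, z - p⟫ := by
  have growth : f p + 1 / 2 * ‖p - w‖ ^ 2 + 1 / 2 * ‖p - z‖ ^ 2 ≤ f z + 1 / 2 * ‖z - w‖ ^ 2 :=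
    add_modulus_le_of_isMinOn (strongConvexOn_add_half_norm_sub_sq hf w) hp.2 hp.1 hz
  rw [norm_sub_rev p z] at growth
  linarith [two_mul_inner_sub_sub w p z]

theorem extrapolation_le_inner {θ : ℝ} {x : E} (hp : IsProx s f w p) (hf : ConvexOn ℝ s f)
    (hθ : 0 ≤ θ) (hx : x ∈ s) (hz : z ∈ s) :
    (1 + θ) * f p - θ * f x - f z ≤ ⟪p - w, z - (p + θ • (p - x))⟫ :=
  calc
    (1 + θ) * f p - θ * f x - f z = (f p - f z) + θ * (f p - f x) := by ring
    _ ≤ ⟪p - w, z - p⟫ + θ * ⟪p - w, x - p⟫ := by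
      gcongr
      · exact hp.sub_le_inner hf hz
      · exact hp.sub_le_inner hf hx
    _ = ⟪p - w, z - (p + θ • (p - x))⟫ := by
      rw [← real_inner_smul_right, ← inner_add_right]
      congr 1
      module

theorem forward_backward_le {g : E → ℝ} {lam : ℝ} {a u : E}
    (hp : IsProx s (lam • g) (a - lam • u) p) (hg : ConvexOn ℝ s g) (hlam : 0 ≤ lam)
    (hz : z ∈ s) : lam * (g p - g z) ≤ ⟪p - a, z - p⟫ + lam * ⟪u, z - p⟫ :=
  calc
    lam * (g p - g z) = (lam • g) p - (lam • g) z := mul_sub _ _ _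
    _ ≤ ⟪p - (a - lam • u), z - p⟫ := hp.sub_le_inner (hg.smul hlam) hz
    _ = ⟪p - a, z - p⟫ + lam * ⟪u, z - p⟫ := by
      rw [← sub_add, inner_add_left, real_inner_smul_left]

theorem forward_backward_extrapolation_le {g : E → ℝ} {lam θ : ℝ} {a u y : E}
    (hp : IsProx s (lam • g) (a - lam • u) p) (hg : ConvexOn ℝ s g) (hlam : 0 ≤ lam)
    (hθ : 0 ≤ θ) (ha : a ∈ s) (hz : z ∈ s) (hy : y = p + θ • (p - a)) :
    θ * lam * ((1 + θ) * g p - θ * g a - g z) ≤ ⟪y - p, z - y⟫ + θ * lam * ⟪u, z - y⟫ := by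
  have hdir : θ • (p - (a - lam • u)) = y - p + (θ * lam) • u := by rw [hy]; module
  have hextr := hp.extrapolation_le_inner (hg.smul hlam) hθ ha hz
  rw [← hy] at hextr
  calc
    θ * lam * ((1 + θ) * g p - θ * g a - g z)
        = θ * ((1 + θ) * (lam • g) p - θ * (lam • g) a - (lam • g) z) := by
      simp only [Pi.smul_apply, smul_eq_mul]; ring
    _ ≤ θ * ⟪p - (a - lam • u), z - y⟫ := mul_le_mul_of_nonneg_left hextr hθ
    _ = ⟪y - p, z - y⟫ + θ * lam * ⟪u, z - y⟫ := by
      rw [← real_inner_smul_left, hdir, inner_add_left, real_inner_smul_left]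

end IsProx

theorem mul_inner_sub_le_of_mul_norm_sub_le {c K : ℝ} {a b : E} (hc : 0 ≤ c)
    (h : c * ‖a - b‖ ≤ K) (v : E) : c * ⟪b - a, v⟫ ≤ K * ‖v‖ :=
  calc
    c * ⟪b - a, v⟫ ≤ c * (‖b - a‖ * ‖v‖) := by gcongr; exact real_inner_le_norm _ _
    _ = c * ‖a - b‖ * ‖v‖ := by rw [norm_sub_rev, mul_assoc]
    _ ≤ K * ‖v‖ := by gcongr

theorem basic_lemma_alg2_general {s : Set E} (F : E → E) {g : E → ℝ} (hg : ConvexOn ℝ s g)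
    {α lamm1 θn lamn : ℝ} (hlamm1 : 0 ≤ lamm1) (hθn : 0 ≤ θn) (hlamn : lamn = θn * lamm1)
    {xnm1 xn xnp1 ynm1 yn x : E} (hxnm1 : xnm1 ∈ s) (hyn : yn = xn + θn • (xn - xnm1))
    (hxn : IsProx s (lamm1 • g) (xnm1 - lamm1 • F ynm1) xn)
    (hxnp1 : IsProx s (lamn • g) (xn - lamn • F yn) xnp1)
    (hls : lamn * ‖F yn - F ynm1‖ ≤ α * ‖yn - ynm1‖) (hx : x ∈ s) :
    ‖xnp1 - x‖ ^ 2 ≤ ‖xn - x‖ ^ 2 - ‖yn - xn‖ ^ 2 - ‖xnp1 - yn‖ ^ 2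
      + 2 * α * ‖yn - ynm1‖ * ‖xnp1 - yn‖
      - 2 * lamn * ((1 + θn) * g xn - θn * g xnm1 - g x)
      - 2 * lamn * ⟪F yn, yn - x⟫ := by
  have hlamn₀ : 0 ≤ lamn := hlamn ▸ mul_nonneg hθn hlamm1
  have extrapolated_step : lamn * ((1 + θn) * g xn - θn * g xnm1 - g xnp1) ≤
      ⟪yn - xn, xnp1 - yn⟫ + lamn * ⟪F ynm1, xnp1 - yn⟫ := by
    simpa only [hlamn] using
      hxn.forward_backward_extrapolation_le hg hlamm1 hθn hxnm1 hxnp1.1 hyn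
  have current_step := hxnp1.forward_backward_le hg hlamn₀ hx
  have step_size_bound := mul_inner_sub_le_of_mul_norm_sub_le hlamn₀ hls (xnp1 - yn)
  have inner_split : ⟪F yn, x - xnp1⟫ = -⟪F yn, yn - x⟫ - ⟪F yn, xnp1 - yn⟫ := by
    simp only [inner_sub_right]; ring
  rw [inner_split] at current_step
  rw [inner_sub_left] at step_size_bound
  rw [norm_sub_rev xnp1 x, norm_sub_rev xn x]
  linarith [two_mul_inner_sub_sub xn yn xnp1, two_mul_inner_sub_sub xn xnp1 x]

end ProximalPoint

/-- Basic inequality for Algorithm 2 (Lemma 2.7 of the paper). -/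
theorem basic_lemma_alg2
    {E : Type*} [NormedAddCommGroup E] [InnerProductSpace ℝ E] [FiniteDimensional ℝ E]
    (F : E → E) (g : E → ℝ) (hg : ConvexOn ℝ Set.univ g)
    (α lamm1 θn : ℝ) (hα : 0 ≤ α) (hlamm1 : 0 < lamm1) (hθn : 0 < θn)
    (lamn : ℝ) (hlamn : lamn = θn * lamm1)
    (xnm1 xn xnp1 ynm1 yn : E)
    (hyn : yn = xn + θn • (xn - xnm1))
    (hxn : ∀ z : E, lamm1 * g xn + (1 / 2) * ‖xn - (xnm1 - lamm1 • F ynm1)‖ ^ 2 ≤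
      lamm1 * g z + (1 / 2) * ‖z - (xnm1 - lamm1 • F ynm1)‖ ^ 2)
    (hxnp1 : ∀ z : E, lamn * g xnp1 + (1 / 2) * ‖xnp1 - (xn - lamn • F yn)‖ ^ 2 ≤
      lamn * g z + (1 / 2) * ‖z - (xn - lamn • F yn)‖ ^ 2)
    (hls : lamn * ‖F yn - F ynm1‖ ≤ α * ‖yn - ynm1‖) :
    ∀ x : E,
      ‖xnp1 - x‖ ^ 2 ≤ ‖xn - x‖ ^ 2 - ‖yn - xn‖ ^ 2 - ‖xnp1 - yn‖ ^ 2
        + 2 * α * ‖yn - ynm1‖ * ‖xnp1 - yn‖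
        - 2 * lamn * ((1 + θn) * g xn - θn * g xnm1 - g x)
        - 2 * lamn * ⟪F yn, yn - x⟫ :=
  fun x ↦ basic_lemma_alg2_general F hg hlamm1.le hθn.le hlamn (Set.mem_univ xnm1) hyn
    ⟨Set.mem_univ xn, fun z _ ↦ hxn z⟩ ⟨Set.mem_univ xnp1, fun z _ ↦ hxnp1 z⟩ hls (Set.mem_univ x)
end

section
/- Let σ ∈ (0,1), L > 0, and let (λ_n) and (θ_n) be sequences of positive real numbers such that for every n ≥ 1 there exists i_n ∈ ℕ with λ_n = √(1+θ_{n−1})·σ^{i_n}·λ_{n−1}, and moreover if i_n ≥ 1 then √(1+θ_{n−1})·σ^{i_n−1}·λ_{n−1} > 1/L. Then λ_n ≥ min(λ_0, σ/L) for all n; in particular liminf λ_n > 0. -/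
/-!
Consider one line search. If its first trial stepsize `√(1 + θ n) * lam n` is accepted, the stepsize
has not decreased. Otherwise the last rejected trial exceeds `1 / L`, and the accepted one is `σ`
times it, hence at least `σ / L`.
-/

theorem inf_le_of_le_succ_or_le {α : Type*} [SemilatticeInf α] {u : ℕ → α} {b : α}
    (hu : ∀ n, u n ≤ u (n + 1) ∨ b ≤ u (n + 1)) (n : ℕ) : u 0 ⊓ b ≤ u n := by
  induction n with
  | zero => exact inf_le_left
  | succ n ih =>
    rcases hu n with h_mono | h_bound
    · exact ih.trans h_mono
    · exact inf_le_of_right_le h_bound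

section Backtracking

variable {R : Type*} [CommSemiring R]

theorem le_mul_pow_mul_or_mul_le_mul_pow_mul [PartialOrder R] [IsOrderedRing R] {ρ σ a c : R}
    {i : ℕ} (hρ : 1 ≤ ρ) (hσ : 0 ≤ σ) (ha : 0 ≤ a)
    (h_rejected : 1 ≤ i → c ≤ ρ * σ ^ (i - 1) * a) :
    a ≤ ρ * σ ^ i * a ∨ σ * c ≤ ρ * σ ^ i * a := by
  cases i with
  | zero =>
    left
    simpa only [pow_zero, mul_one] using le_mul_of_one_le_left ha hρ
  | succ k =>
    right
    calc
      σ * c ≤ σ * (ρ * σ ^ k * a) :=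
        mul_le_mul_of_nonneg_left (h_rejected k.succ_pos) hσ
      _ = ρ * σ ^ (k + 1) * a := by ring

theorem lambda_bounded_below_alg2_general [LinearOrder R] [IsOrderedRing R] {σ c : R}
    {lam ρ : ℕ → R} (hσ : 0 ≤ σ) (hlam : ∀ n, 0 ≤ lam n) (hρ : ∀ n, 1 ≤ ρ n)
    (h : ∀ n, ∃ i : ℕ, lam (n + 1) = ρ n * σ ^ i * lam n ∧
      (1 ≤ i → c ≤ ρ n * σ ^ (i - 1) * lam n)) (n : ℕ) :
    min (lam 0) (σ * c) ≤ lam n := by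
  refine inf_le_of_le_succ_or_le (fun k ↦ ?_) n
  obtain ⟨i, h_step, h_rejected⟩ := h k
  rw [h_step]
  exact le_mul_pow_mul_or_mul_le_mul_pow_mul (hρ k) hσ (hlam k) h_rejected

end Backtracking

/-- Stepsizes in Algorithm 2 are bounded below: `λ_n ≥ min (λ_0) (σ/L)` for all `n`. -/
theorem lambda_bounded_below_alg2
    (σ L : ℝ) (hσ : σ ∈ Set.Ioo (0 : ℝ) 1) (hL : 0 < L)
    (lam θ : ℕ → ℝ) (hlam : ∀ n, 0 < lam n) (hθ : ∀ n, 0 < θ n)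
    (h : ∀ n : ℕ, ∃ i : ℕ,
      lam (n + 1) = Real.sqrt (1 + θ n) * σ ^ i * lam n ∧
      (1 ≤ i → 1 / L < Real.sqrt (1 + θ n) * σ ^ (i - 1) * lam n)) :
    ∀ n, min (lam 0) (σ / L) ≤ lam n := by
  rw [div_eq_mul_one_div]
  have hρ (n : ℕ) : 1 ≤ √(1 + θ n) := Real.one_le_sqrt.2 (le_add_of_nonneg_right (hθ n).le)
  exact lambda_bounded_below_alg2_general hσ.1.le (fun n ↦ (hlam n).le) hρ
    fun n ↦ (h n).imp fun _ ↦ And.imp_right fun h_rejected hi ↦ (h_rejected hi).le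
end

section
/- Let F : E → E be monotone, g : E → ℝ convex, α ≥ 0, λ_{n−1} > 0, θ_n > 0, θ_{n−1} ≥ 0 with θ_n² ≤ 1 + θ_{n−1}, and set λ_n = θ_n·λ_{n−1}. Let x̄ ∈ E be a solution of VI(F, g), i.e. Ψ(x̄, x) ≥ 0 for all x ∈ E, where Ψ(u, v) := ⟪F(u), v − u⟫ + g(v) − g(u). Let x_{n−1}, x_n, x_{n+1}, y_{n−1}, y_n ∈ E satisfy: y_n = x_n + θ_n·(x_n − x_{n−1}); x_n is the minimizer over E of z ↦ λ_{n−1}·g(z) + (1/2)·‖z − (x_{n−1} − λ_{n−1}·F(y_{n−1}))‖²; x_{n+1} is the minimizer over E of z ↦ λ_n·g(z) + (1/2)·‖z − (x_n − λ_n·F(y_n))‖²; and λ_n·‖F(y_n) − F(y_{n−1})‖ ≤ α·‖y_n − y_{n−1}‖. Then ‖x_{n+1} − x̄‖² ≤ ‖x_n − x̄‖² − (1 − α(1+√2))·‖y_n − x_n‖² − (1 − √2·α)·‖x_{n+1} − y_n‖² + α·‖x_n − y_{n−1}‖² − 2·λ_n·(1+θ_n)·Ψ(x̄, x_n) + 2·λ_{n−1}·(1+θ_{n−1})·Ψ(x̄,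 x_{n−1}). -/
open scoped RealInnerProductSpace

open Filter Set Topology

/-!
A proximal step `p` from `w` satisfies the variational inequality
`l (g p - g z) ≤ ⟪p - w, z - p⟫` for every `z`. For the step producing `x_{n+1}` it is tested at the
solution `xbar`. For the step producing `x_n` it is tested at `x_{n+1}` with weight `θ_n` and at
`x_{n-1}` with weight `θ_n ^ 2`: these weights turn `λ_{n-1}` into `λ_n` and `x_n - x_{n-1}` into
`y_n - x_n`, and the two test directions combine to `x_{n+1} - y_n`, so that the inequalities of
both steps can be added. Monotonicity replaces `F y_n` by `F xbar`, where the extrapolation yields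
`(1 + θ_n) Ψ(xbar, x_n) - θ_n Ψ(xbar, x_{n-1})`, and the remaining cross term
`⟪F y_n - F y_{n-1}, y_n - x_{n+1}⟫` is absorbed by the step-size rule and Young's inequality.
-/

/-- The gap `Ψ(u, v)` of the variational inequality `VI(F, g)`: its solutions are the points `u`
with `0 ≤ viGap F g u v` for all `v`. -/
def viGap {E : Type*} [NormedAddCommGroup E] [InnerProductSpace ℝ E]
    (F : E → E) (g : E → ℝ) (u v : E) : ℝ :=
  ⟪F u, v - u⟫ + g v - g u

/-- `IsProxOn g s l w p` says that `p` is a value at `w` of the proximal map of `l * g` over `s`.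
The set `s` stands for the domain of an extended-valued `g`; a predicate on `p`, rather than a
function of `w`, avoids choosing a minimizer. -/
def IsProxOn {E : Type*} [NormedAddCommGroup E] (g : E → ℝ) (s : Set E) (l : ℝ) (w p : E) : Prop :=
  p ∈ s ∧ IsMinOn (fun z ↦ l * g z + 1 / 2 * ‖z - w‖ ^ 2) s p

theorem sub_le_of_isMinOn_add_of_hasLineDerivAt {E : Type*} [AddCommGroup E] [Module ℝ E]
    {f h : E → ℝ} {s : Set E} {p z : E} {h' : ℝ} (hf : ConvexOn ℝ s f)
    (hmin : IsMinOn (fun x ↦ f x + h x) s p) (hp : p ∈ s) (hz : z ∈ s)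
    (hh : HasLineDerivAt ℝ h h' p (z - p)) :
    f p - f z ≤ h' := by
  refine ge_of_tendsto hh.tendsto_slope_zero_right ?_
  filter_upwards [Ioc_mem_nhdsGT zero_lt_one] with t ⟨ht0, ht1⟩
  have hcomb : (1 - t) • p + t • z = p + t • (z - p) := by module
  have hconv : f (p + t • (z - p)) ≤ (1 - t) * f p + t * f z := by
    simpa only [hcomb, smul_eq_mul] using
      hf.2 hp hz (sub_nonneg.2 ht1) ht0.le (sub_add_cancel 1 t)
  have hmem : p + t • (z - p) ∈ s := hf.1.add_smul_sub_mem hp hz ⟨ht0.le, ht1⟩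
  have hle : f p + h p ≤ f (p + t • (z - p)) + h (p + t • (z - p)) := hmin hmem
  rw [smul_eq_mul, le_inv_mul_iff₀ ht0]
  linarith

theorem two_mul_add_mul_le_add_sqrt_two_mul_sq (a b c : ℝ) :
    2 * ((a + c) * b) ≤ (1 + √2) * a ^ 2 + √2 * b ^ 2 + c ^ 2 := by
  have hsq : √2 * √2 = 2 := Real.mul_self_sqrt zero_le_two
  have hpos : 0 < √2 := by positivity
  have hdiv : 2 * (b * (a + c)) ≤ √2 * b ^ 2 + (√2)⁻¹ * (a + c) ^ 2 := by
    simpa [mul_assoc] using two_mul_le_add_mul_sq (a := b) (b := a + c) hpos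
  have hsum : (√2)⁻¹ * (a + c) ^ 2 ≤ (1 + √2) * a ^ 2 + c ^ 2 := by
    rw [inv_mul_le_iff₀ hpos]
    have hsquare : 0 ≤ (1 + √2) * (a - (√2 - 1) * c) ^ 2 := by positivity
    linear_combination hsquare + (-a ^ 2 - 2 * a * c - c ^ 2 + √2 * c ^ 2) * hsq
  linarith

section InnerProductSpace

variable {E : Type*} [NormedAddCommGroup E] [InnerProductSpace ℝ E]

theorem hasLineDerivAt_half_mul_norm_sub_sq (w p v : E) :
    HasLineDerivAt ℝ (fun z ↦ 1 / 2 * ‖z - w‖ ^ 2) ⟪p - w, v⟫ p v := by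
  have hline : HasDerivAt (fun t : ℝ ↦ p + t • v - w) v 0 := by
    simpa using (((hasDerivAt_id (0 : ℝ)).smul_const v).const_add p).sub_const w
  simpa [HasLineDerivAt] using hline.norm_sq.const_mul (1 / 2 : ℝ)

theorem one_add_mul_viGap_sub_mul_viGap (F : E → E) (g : E → ℝ) (u x₀ x₁ : E) (θ : ℝ) :
    (1 + θ) * viGap F g u x₁ - θ * viGap F g u x₀
      = ⟪F u, x₁ + θ • (x₁ - x₀) - u⟫ + (1 + θ) * g x₁ - θ * g x₀ - g u := by
  simp only [viGap, inner_sub_right, inner_add_right, real_inner_smul_right]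
  ring

namespace IsProxOn

variable {g : E → ℝ} {s : Set E} {l : ℝ}

theorem mul_sub_le_inner {w p z : E} (hp : IsProxOn g s l w p) (hg : ConvexOn ℝ s g)
    (hl : 0 ≤ l) (hz : z ∈ s) :
    l * (g p - g z) ≤ ⟪p - w, z - p⟫ := by
  rw [mul_sub]
  exact sub_le_of_isMinOn_add_of_hasLineDerivAt (f := fun x ↦ l * g x) (hg.smul hl) hp.2 hp.1 hz
    (hasLineDerivAt_half_mul_norm_sub_sq w p (z - p))

theorem norm_sub_sq_le {x v p z : E} (hp : IsProxOn g s l (x - l • v) p) (hg : ConvexOn ℝ s g)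
    (hl : 0 ≤ l) (hz : z ∈ s) :
    ‖p - z‖ ^ 2 ≤ ‖x - z‖ ^ 2 - ‖p - x‖ ^ 2 + 2 * l * (⟪v, z - p⟫ + g z - g p) := by
  have hvar := hp.mul_sub_le_inner hg hl hz
  have hsplit : ⟪p - (x - l • v), z - p⟫ = ⟪p - x, z - p⟫ + l * ⟪v, z - p⟫ := by
    rw [← real_inner_smul_left, ← inner_add_left, sub_add]
  have hpolar : ‖z - x‖ ^ 2 = ‖p - x‖ ^ 2 + 2 * ⟪p - x, z - p⟫ + ‖z - p‖ ^ 2 := by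
    rw [← norm_add_sq_real, add_comm, sub_add_sub_cancel]
  rw [norm_sub_rev p z, norm_sub_rev x z]
  linarith

theorem mul_extrapolation_le_inner {x₀ x₁ v z : E} {θ : ℝ}
    (hx₁ : IsProxOn g s l (x₀ - l • v) x₁) (hg : ConvexOn ℝ s g) (hl : 0 ≤ l) (hθ : 0 ≤ θ)
    (hx₀ : x₀ ∈ s) (hz : z ∈ s) :
    θ * l * ((1 + θ) * g x₁ - θ * g x₀ - g z)
      ≤ ⟪θ • (x₁ - x₀) + (θ * l) • v, z - (x₁ + θ • (x₁ - x₀))⟫ := by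
  have hvar_z := hx₁.mul_sub_le_inner hg hl hz
  have hvar_x₀ := hx₁.mul_sub_le_inner hg hl hx₀
  set r := x₁ - (x₀ - l • v) with hr
  calc θ * l * ((1 + θ) * g x₁ - θ * g x₀ - g z)
      = θ * (l * (g x₁ - g z)) + θ ^ 2 * (l * (g x₁ - g x₀)) := by ring
    _ ≤ θ * ⟪r, z - x₁⟫ + θ ^ 2 * ⟪r, x₀ - x₁⟫ := by gcongr
    _ = ⟪θ • r, (z - x₁) + θ • (x₀ - x₁)⟫ := by
      rw [inner_add_right, real_inner_smul_left, real_inner_smul_left, real_inner_smul_right]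
      ring
    _ = ⟪θ • (x₁ - x₀) + (θ * l) • v, z - (x₁ + θ • (x₁ - x₀))⟫ := by
      congr 1
      · rw [hr]; module
      · module

theorem norm_sub_sq_le_of_extrapolation {x₀ x₁ x₂ v₀ v₁ y z : E} {θ : ℝ}
    (hx₁ : IsProxOn g s l (x₀ - l • v₀) x₁)
    (hx₂ : IsProxOn g s (θ * l) (x₁ - (θ * l) • v₁) x₂) (hy : y = x₁ + θ • (x₁ - x₀))
    (hg : ConvexOn ℝ s g) (hl : 0 ≤ l) (hθ : 0 ≤ θ) (hx₀ : x₀ ∈ s) (hz : z ∈ s) :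
    ‖x₂ - z‖ ^ 2 ≤ ‖x₁ - z‖ ^ 2 - ‖y - x₁‖ ^ 2 - ‖x₂ - y‖ ^ 2
      + 2 * (θ * l) * ⟪v₁ - v₀, y - x₂⟫
      - 2 * (θ * l) * (⟪v₁, y - z⟫ + (1 + θ) * g x₁ - θ * g x₀ - g z) := by
  have hstep := hx₂.norm_sub_sq_le hg (mul_nonneg hθ hl) hz
  have hextra := hx₁.mul_extrapolation_le_inner hg hl hθ hx₀ hx₂.1
  have hdiff : θ • (x₁ - x₀) = y - x₁ := by rw [hy, add_sub_cancel_left]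
  rw [← hy, hdiff, inner_add_left, real_inner_smul_left] at hextra
  have hpolar : ‖x₂ - x₁‖ ^ 2 = ‖y - x₁‖ ^ 2 + 2 * ⟪y - x₁, x₂ - y⟫ + ‖x₂ - y‖ ^ 2 := by
    rw [← norm_add_sq_real, add_comm, sub_add_sub_cancel]
  have hinner : ⟪v₁, z - x₂⟫ + ⟪v₀, x₂ - y⟫ = ⟪v₁ - v₀, y - x₂⟫ - ⟪v₁, y - z⟫ := by
    simp only [inner_sub_left, inner_sub_right]
    ring
  linear_combination hstep + 2 * hextra - hpolar + 2 * (θ * l) * hinner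

theorem norm_sub_sq_le_of_inner_nonneg {F : E → E} {x₀ x₁ x₂ v₀ y z : E} {θ : ℝ}
    (hx₁ : IsProxOn g s l (x₀ - l • v₀) x₁)
    (hx₂ : IsProxOn g s (θ * l) (x₁ - (θ * l) • F y) x₂) (hy : y = x₁ + θ • (x₁ - x₀))
    (hF : 0 ≤ ⟪F y - F z, y - z⟫)
    (hg : ConvexOn ℝ s g) (hl : 0 ≤ l) (hθ : 0 ≤ θ) (hx₀ : x₀ ∈ s) (hz : z ∈ s) :
    ‖x₂ - z‖ ^ 2 ≤ ‖x₁ - z‖ ^ 2 - ‖y - x₁‖ ^ 2 - ‖x₂ - y‖ ^ 2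
      + 2 * (θ * l) * ⟪F y - v₀, y - x₂⟫
      - 2 * (θ * l) * ((1 + θ) * viGap F g z x₁ - θ * viGap F g z x₀) := by
  have hstep := hx₁.norm_sub_sq_le_of_extrapolation hx₂ hy hg hl hθ hx₀ hz
  rw [inner_sub_left, sub_nonneg] at hF
  rw [one_add_mul_viGap_sub_mul_viGap, ← hy]
  refine hstep.trans ?_
  gcongr

end IsProxOn

theorem two_mul_inner_le_of_mul_norm_le {d y₀ y₁ : E} {l α : ℝ} (hl : 0 ≤ l) (hα : 0 ≤ α)
    (hd : l * ‖d‖ ≤ α * ‖y₁ - y₀‖) (x₁ x₂ : E) :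
    2 * l * ⟪d, y₁ - x₂⟫
      ≤ α * ((1 + √2) * ‖y₁ - x₁‖ ^ 2 + √2 * ‖x₂ - y₁‖ ^ 2 + ‖x₁ - y₀‖ ^ 2) := by
  have htri : l * ‖d‖ ≤ α * (‖y₁ - x₁‖ + ‖x₁ - y₀‖) :=
    hd.trans (mul_le_mul_of_nonneg_left (norm_sub_le_norm_sub_add_norm_sub _ _ _) hα)
  calc 2 * l * ⟪d, y₁ - x₂⟫
      ≤ 2 * l * (‖d‖ * ‖y₁ - x₂‖) := by gcongr; exact real_inner_le_norm _ _
    _ = 2 * (l * ‖d‖) * ‖x₂ - y₁‖ := by rw [norm_sub_rev y₁ x₂]; ring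
    _ ≤ 2 * (α * (‖y₁ - x₁‖ + ‖x₁ - y₀‖)) * ‖x₂ - y₁‖ := by gcongr
    _ = α * (2 * ((‖y₁ - x₁‖ + ‖x₁ - y₀‖) * ‖x₂ - y₁‖)) := by ring
    _ ≤ _ := by gcongr; exact two_mul_add_mul_le_add_sqrt_two_mul_sq _ _ _

theorem main_inequality_lemma_general {F : E → E} {g : E → ℝ} {s : Set E} (hg : ConvexOn ℝ s g)
    {α lamm1 θn θm1 lamn : ℝ} (hα : 0 ≤ α) (hlamm1 : 0 ≤ lamm1) (hθn : 0 ≤ θn)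
    (hθrec : θn ^ 2 ≤ 1 + θm1) (hlamn : lamn = θn * lamm1)
    {xbar xnm1 xn xnp1 ynm1 yn : E} (hxbar : xbar ∈ s) (hxnm1 : xnm1 ∈ s)
    (hgap : 0 ≤ viGap F g xbar xnm1) (hF : 0 ≤ ⟪F yn - F xbar, yn - xbar⟫)
    (hyn : yn = xn + θn • (xn - xnm1))
    (hxn : IsProxOn g s lamm1 (xnm1 - lamm1 • F ynm1) xn)
    (hxnp1 : IsProxOn g s lamn (xn - lamn • F yn) xnp1)
    (hls : lamn * ‖F yn - F ynm1‖ ≤ α * ‖yn - ynm1‖) :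
    ‖xnp1 - xbar‖ ^ 2 ≤ ‖xn - xbar‖ ^ 2
      - (1 - α * (1 + √2)) * ‖yn - xn‖ ^ 2
      - (1 - √2 * α) * ‖xnp1 - yn‖ ^ 2
      + α * ‖xn - ynm1‖ ^ 2
      - 2 * lamn * (1 + θn) * viGap F g xbar xn
      + 2 * lamm1 * (1 + θm1) * viGap F g xbar xnm1 := by
  subst hlamn
  have hstep := hxn.norm_sub_sq_le_of_inner_nonneg hxnp1 hyn hF hg hlamm1 hθn hxnm1 hxbar
  have hcross := two_mul_inner_le_of_mul_norm_le (mul_nonneg hθn hlamm1) hα hls xn xnp1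
  have hweight : lamm1 * θn ^ 2 * viGap F g xbar xnm1
      ≤ lamm1 * (1 + θm1) * viGap F g xbar xnm1 := by gcongr
  linear_combination hstep + hcross + 2 * hweight

end InnerProductSpace

/-- Main inequality (Lemma 2.10 of the paper). -/
theorem main_inequality_lemma
    {E : Type*} [NormedAddCommGroup E] [InnerProductSpace ℝ E] [FiniteDimensional ℝ E]
    (F : E → E) (hFmono : ∀ x y : E, 0 ≤ ⟪F x - F y, x - y⟫)
    (g : E → ℝ) (hg : ConvexOn ℝ Set.univ g)
    (Ψ : E → E → ℝ) (hΨ : ∀ u v : E, Ψ u v = ⟪F u, v - u⟫ + g v - g u)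
    (α lamm1 θn θm1 : ℝ) (hα : 0 ≤ α) (hlamm1 : 0 < lamm1) (hθn : 0 < θn)
    (hθm1 : 0 ≤ θm1) (hθrec : θn ^ 2 ≤ 1 + θm1)
    (lamn : ℝ) (hlamn : lamn = θn * lamm1)
    (xbar : E) (hsol : ∀ x : E, 0 ≤ Ψ xbar x)
    (xnm1 xn xnp1 ynm1 yn : E)
    (hyn : yn = xn + θn • (xn - xnm1))
    (hxn : ∀ z : E, lamm1 * g xn + (1 / 2) * ‖xn - (xnm1 - lamm1 • F ynm1)‖ ^ 2 ≤
      lamm1 * g z + (1 / 2) * ‖z - (xnm1 - lamm1 • F ynm1)‖ ^ 2)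
    (hxnp1 : ∀ z : E, lamn * g xnp1 + (1 / 2) * ‖xnp1 - (xn - lamn • F yn)‖ ^ 2 ≤
      lamn * g z + (1 / 2) * ‖z - (xn - lamn • F yn)‖ ^ 2)
    (hls : lamn * ‖F yn - F ynm1‖ ≤ α * ‖yn - ynm1‖) :
    ‖xnp1 - xbar‖ ^ 2 ≤ ‖xn - xbar‖ ^ 2
      - (1 - α * (1 + Real.sqrt 2)) * ‖yn - xn‖ ^ 2
      - (1 - Real.sqrt 2 * α) * ‖xnp1 - yn‖ ^ 2
      + α * ‖xn - ynm1‖ ^ 2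
      - 2 * lamn * (1 + θn) * Ψ xbar xn
      + 2 * lamm1 * (1 + θm1) * Ψ xbar xnm1 := by
  obtain rfl : Ψ = viGap F g := funext₂ hΨ
  exact main_inequality_lemma_general hg hα hlamm1.le hθn.le hθrec hlamn (mem_univ _) (mem_univ _)
    (hsol xnm1) (hFmono yn xbar) hyn ⟨mem_univ _, fun z _ ↦ hxn z⟩ ⟨mem_univ _, fun z _ ↦ hxnp1 z⟩
    hls
end

section
/- Let α ∈ (0, √2 − 1), x̄ ∈ E, and let (x_n), (y_n) be sequences in E and (c_n) a sequence of nonnegative real numbers such that for all n ≥ 1: ‖x_{n+1} − x̄‖² ≤ ‖x_n − x̄‖² − (1 − α(1+√2))·‖y_n − x_n‖² − (1 − √2·α)·‖x_{n+1} − y_n‖² + α·‖x_n − y_{n−1}‖² − c_n + c_{n−1}. Then (x_n) is bounded, ‖x_n − y_n‖ → 0, ‖x_{n+1} − y_n‖ → 0, and ‖x_{n+1} − x_n‖ → 0 as n → ∞. -/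
/-!
Taking the coefficient of `‖x (n + 1) - y n‖ ^ 2` as weight, the energy
`‖x (n + 1) - xbar‖ ^ 2 + (1 - √2 * α) * ‖x (n + 1) - y n‖ ^ 2 + c n` decreases at each step by at
least `δ * (‖y (n + 1) - x (n + 1)‖ ^ 2 + ‖x (n + 1) - y n‖ ^ 2)`, where `δ = 1 - α * (1 + √2)` is
positive exactly when `α < √2 - 1`. As the energy is bounded below, these decrements are summable;
as it is bounded above, so is `‖x n - xbar‖`.
-/

open Filter Topology

theorem summable_of_succ_add_le {V d : ℕ → ℝ} (hV : BddBelow (Set.range V)) (hd : ∀ n, 0 ≤ d n)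
    (h : ∀ n, V (n + 1) + d n ≤ V n) : Summable d := by
  obtain ⟨m, hm⟩ := hV
  refine summable_of_sum_range_le (c := V 0 - m) hd fun n => ?_
  calc
    ∑ i ∈ Finset.range n, d i ≤ ∑ i ∈ Finset.range n, (V i - V (i + 1)) :=
      Finset.sum_le_sum fun i _ => by linarith [h i]
    _ = V 0 - V n := Finset.sum_range_sub' V n
    _ ≤ V 0 - m := by linarith [hm (Set.mem_range_self n)]

theorem tendsto_zero_of_summable_mul_sq {w : ℝ} (hw : w ≠ 0) {f : ℕ → ℝ}
    (h : Summable fun n => w * f n ^ 2) : Tendsto f atTop (𝓝 0) := by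
  have hsq : Tendsto (fun n => f n ^ 2) atTop (𝓝 0) :=
    ((summable_mul_left_iff hw).1 h).tendsto_atTop_zero
  refine (tendsto_zero_iff_abs_tendsto_zero f).2 ?_
  simpa only [Real.sqrt_sq_eq_abs, Real.sqrt_zero, Function.comp_def] using hsq.sqrt

section Energy

variable {X : Type*} [PseudoMetricSpace X] {a b γ : ℝ} {p : X} {x y : ℕ → X} {c : ℕ → ℝ}

/-- The Lyapunov function of the iteration: the squared distance to the reference point `p`, plus
the residual `dist (x (n + 1)) (y n) ^ 2` with weight `b` and the perturbation `c n`. The index is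
shifted so that `n = 0` is the first value controlled by the main inequality. -/
def energy (b : ℝ) (p : X) (x y : ℕ → X) (c : ℕ → ℝ) (n : ℕ) : ℝ :=
  dist (x (n + 1)) p ^ 2 + b * dist (x (n + 1)) (y n) ^ 2 + c n

theorem energy_succ_add_le {n : ℕ}
    (h : dist (x (n + 2)) p ^ 2 ≤ dist (x (n + 1)) p ^ 2
      - a * dist (y (n + 1)) (x (n + 1)) ^ 2 - b * dist (x (n + 2)) (y (n + 1)) ^ 2
      + γ * dist (x (n + 1)) (y n) ^ 2 - c (n + 1) + c n) :
    energy b p x y c (n + 1)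
        + (a * dist (y (n + 1)) (x (n + 1)) ^ 2 + (b - γ) * dist (x (n + 1)) (y n) ^ 2)
      ≤ energy b p x y c n := by
  unfold energy
  linarith

theorem dist_sq_add_le_energy (p : X) (x y : ℕ → X) (c : ℕ → ℝ) (hb : 0 ≤ b) (n : ℕ) :
    dist (x (n + 1)) p ^ 2 + c n ≤ energy b p x y c n := by
  have : 0 ≤ b * dist (x (n + 1)) (y n) ^ 2 := by positivity
  unfold energy
  linarith

theorem bddBelow_range_energy (p : X) (x y : ℕ → X) (hb : 0 ≤ b)
    (hc : BddBelow (Set.range c)) : BddBelow (Set.range (energy b p x y c)) :=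
  BddBelow.range_mono c (fun n =>
    (le_add_of_nonneg_left (sq_nonneg _)).trans (dist_sq_add_le_energy p x y c hb n)) hc

theorem isBounded_range_of_antitone_energy (hb : 0 ≤ b) (hc : BddBelow (Set.range c))
    (hV : Antitone (energy b p x y c)) : Bornology.IsBounded (Set.range x) := by
  obtain ⟨m, hm⟩ := hc
  have hx (n : ℕ) : dist (x (n + 1)) p ≤ √(energy b p x y c 0 - m) := by
    apply Real.le_sqrt_of_sq_le
    linarith [dist_sq_add_le_energy p x y c hb n, hV n.zero_le, hm (Set.mem_range_self n)]
  refine (Metric.isBounded_iff_subset_closedBall p).2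
    ⟨max (dist (x 0) p) √(energy b p x y c 0 - m), ?_⟩
  rintro _ ⟨_ | n, rfl⟩
  · exact Metric.mem_closedBall.2 (le_max_left _ _)
  · exact Metric.mem_closedBall.2 ((hx n).trans (le_max_right _ _))

theorem consequences_main_inequality_general (ha : 0 < a) (hb : 0 ≤ b) (hγ : γ < b)
    (hc : BddBelow (Set.range c))
    (h : ∀ n, dist (x (n + 2)) p ^ 2 ≤ dist (x (n + 1)) p ^ 2
      - a * dist (y (n + 1)) (x (n + 1)) ^ 2 - b * dist (x (n + 2)) (y (n + 1)) ^ 2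
      + γ * dist (x (n + 1)) (y n) ^ 2 - c (n + 1) + c n) :
    Bornology.IsBounded (Set.range x) ∧
    Tendsto (fun n => dist (x n) (y n)) atTop (𝓝 0) ∧
    Tendsto (fun n => dist (x (n + 1)) (y n)) atTop (𝓝 0) ∧
    Tendsto (fun n => dist (x (n + 1)) (x n)) atTop (𝓝 0) := by
  have hγb : 0 < b - γ := sub_pos.2 hγ
  have hyx_nonneg (n : ℕ) : 0 ≤ a * dist (y (n + 1)) (x (n + 1)) ^ 2 := by positivity
  have hxy_nonneg (n : ℕ) : 0 ≤ (b - γ) * dist (x (n + 1)) (y n) ^ 2 := by positivity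
  have hdecr (n : ℕ) := energy_succ_add_le (h n)
  have hV := bddBelow_range_energy p x y hb hc
  have hanti : Antitone (energy b p x y c) :=
    antitone_nat_of_succ_le fun n => by linarith [hdecr n, hyx_nonneg n, hxy_nonneg n]
  have hyx : Tendsto (fun n => dist (y (n + 1)) (x (n + 1))) atTop (𝓝 0) :=
    tendsto_zero_of_summable_mul_sq ha.ne' <|
      summable_of_succ_add_le hV hyx_nonneg fun n => by linarith [hdecr n, hxy_nonneg n]
  have hxy : Tendsto (fun n => dist (x n) (y n)) atTop (𝓝 0) :=
    (tendsto_add_atTop_iff_nat 1).1 <| by simpa only [dist_comm] using hyx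
  have hxy' : Tendsto (fun n => dist (x (n + 1)) (y n)) atTop (𝓝 0) :=
    tendsto_zero_of_summable_mul_sq hγb.ne' <|
      summable_of_succ_add_le hV hxy_nonneg fun n => by linarith [hdecr n, hyx_nonneg n]
  exact ⟨isBounded_range_of_antitone_energy hb hc hanti, hxy, hxy',
    squeeze_zero (fun _ => dist_nonneg) (fun n => dist_triangle_right (x (n + 1)) (x n) (y n))
      (by simpa only [add_zero] using hxy'.add hxy)⟩

end Energy

theorem mul_one_add_sqrt_two_lt_one {α : ℝ} (hα : α < √2 - 1) : α * (1 + √2) < 1 :=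
  calc
    α * (1 + √2) < (√2 - 1) * (1 + √2) := by gcongr
    _ = 1 := by linear_combination Real.sq_sqrt (zero_le_two : (0 : ℝ) ≤ 2)

/-- Consequences of the main inequality: boundedness of `(x_n)` and vanishing
of `‖x_n - y_n‖`, `‖x_{n+1} - y_n‖`, `‖x_{n+1} - x_n‖`. -/
theorem consequences_main_inequality
    {E : Type*} [NormedAddCommGroup E] [InnerProductSpace ℝ E] [FiniteDimensional ℝ E]
    (α : ℝ) (hα : α ∈ Set.Ioo 0 (Real.sqrt 2 - 1))
    (xbar : E) (x y : ℕ → E) (c : ℕ → ℝ) (hc : ∀ n, 0 ≤ c n)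
    (h : ∀ n : ℕ, 1 ≤ n →
      ‖x (n + 1) - xbar‖ ^ 2 ≤ ‖x n - xbar‖ ^ 2
        - (1 - α * (1 + Real.sqrt 2)) * ‖y n - x n‖ ^ 2
        - (1 - Real.sqrt 2 * α) * ‖x (n + 1) - y n‖ ^ 2
        + α * ‖x n - y (n - 1)‖ ^ 2
        - c n + c (n - 1)) :
    (∃ M : ℝ, ∀ n, ‖x n‖ ≤ M) ∧
    Filter.Tendsto (fun n => ‖x n - y n‖) Filter.atTop (nhds 0) ∧
    Filter.Tendsto (fun n => ‖x (n + 1) - y n‖) Filter.atTop (nhds 0) ∧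
    Filter.Tendsto (fun n => ‖x (n + 1) - x n‖) Filter.atTop (nhds 0) := by
  have hα1 : 0 < 1 - α * (1 + √2) := sub_pos.2 (mul_one_add_sqrt_two_lt_one hα.2)
  have h' (n : ℕ) := h (n + 1) n.succ_pos
  simp only [Nat.add_sub_cancel, ← dist_eq_norm] at h'
  simpa only [isBounded_iff_forall_norm_le, Set.forall_mem_range, dist_eq_norm] using
    consequences_main_inequality_general hα1 (by linarith [hα.1]) (by linarith)
      ⟨0, Set.forall_mem_range.2 hc⟩ h'
end

section
/- Let F : E → E be continuous and g : E → ℝ convex. Let (x_n), (y_n) be sequences in E and (λ_n) positive reals such that for every n and every x ∈ E: ⟪x_{n+1} − x_n + λ_n·F(y_n), x − x_{n+1}⟫ ≥ λ_n·(g(x_{n+1}) − g(x)). Suppose there is a strictly increasing sequence (n_k) of indices and a point x* ∈ E with x_{n_k} → x*, y_{n_k} → x*, ‖x_{n_k+1} − x_{n_k}‖ → 0, and λ_{n_k} ≥ c for some c > 0 and all k. Then ⟪F(x*), x − x*⟫ ≥ g(x*) − g(x) for all x ∈ E, i.e. x* is a solution of the variational inequality VI(F, g). -/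
open scoped RealInnerProductSpace

/-!
Dividing the inequality of the step from `u` to `v` by `lam` says that
`-(lam⁻¹ • (v - u) + F w)` is a subgradient of `g` at `v`. Since the stepsizes stay away from zero,
`lam⁻¹ • (v - u)` vanishes in the limit, and the graph of the subdifferential of a lower
semicontinuous function is closed, so `-F xs` is a subgradient of `g` at `xs`. This is the
variational inequality.
-/

open Filter Topology

section Subgradient

variable {E : Type*} [SeminormedAddCommGroup E] [InnerProductSpace ℝ E] {g : E → ℝ} {p a : E}

/-- `p` is a subgradient of `g` at `a`, that is, `p ∈ ∂g(a)`: the affine function through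
`(a, g a)` with gradient `p` is a global minorant of `g`. -/
def IsSubgradientAt (g : E → ℝ) (p a : E) : Prop :=
  ∀ z, g a + ⟪p, z - a⟫ ≤ g z

theorem isSubgradientAt_neg_iff :
    IsSubgradientAt g (-p) a ↔ ∀ z, g a - g z ≤ ⟪p, z - a⟫ := by
  refine forall_congr' fun z => ?_
  rw [inner_neg_left, ← sub_eq_add_neg, sub_le_comm]

theorem isSubgradientAt_neg_inv_smul_iff {r : ℝ} (hr : 0 < r) :
    IsSubgradientAt g (-(r⁻¹ • p)) a ↔ ∀ z, r * (g a - g z) ≤ ⟪p, z - a⟫ := by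
  refine isSubgradientAt_neg_iff.trans (forall_congr' fun z => ?_)
  rw [real_inner_smul_left, le_inv_mul_iff₀ hr]

theorem isSubgradientAt_of_tendsto {ι : Type*} {l : Filter ι} [l.NeBot] {P A : ι → E}
    (hg : LowerSemicontinuousAt g a) (hP : Tendsto P l (𝓝 p)) (hA : Tendsto A l (𝓝 a))
    (hsub : ∀ᶠ i in l, IsSubgradientAt g (P i) (A i)) : IsSubgradientAt g p a := by
  intro z
  have hlim : Tendsto (fun i => g z - ⟪P i, z - A i⟫) l (𝓝 (g z - ⟪p, z - a⟫)) :=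
    (hP.inner (hA.const_sub z)).const_sub (g z)
  rw [← le_sub_iff_add_le]
  refine le_of_forall_lt_imp_le_of_dense fun r hr => ge_of_tendsto hlim ?_
  filter_upwards [hA.eventually (hg r hr), hsub] with i hlt hi
  exact hlt.le.trans (le_sub_iff_add_le.2 (hi z))

end Subgradient

theorem tendsto_inv_smul_zero_of_eventually_le_norm {ι 𝕜 E : Type*} [NormedDivisionRing 𝕜]
    [SeminormedAddCommGroup E] [Module 𝕜 E] [NormSMulClass 𝕜 E] {l : Filter ι} {r : ι → 𝕜}
    {d : ι → E} {c : ℝ} (hc : 0 < c) (hr : ∀ᶠ i in l, c ≤ ‖r i‖) (hd : Tendsto d l (𝓝 0)) :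
    Tendsto (fun i => (r i)⁻¹ • d i) l (𝓝 0) := by
  have hmajorant : Tendsto (fun i => c⁻¹ * ‖d i‖) l (𝓝 0) := by
    simpa using hd.norm.const_mul c⁻¹
  refine squeeze_zero_norm' ?_ hmajorant
  filter_upwards [hr] with i hi
  rw [norm_smul, norm_inv]
  gcongr

theorem cluster_point_solves_vi_general {ι E : Type*} [SeminormedAddCommGroup E]
    [InnerProductSpace ℝ E] {l : Filter ι} [l.NeBot] {F : E → E} {g : E → ℝ} {xs : E}
    (hF : ContinuousAt F xs) (hg : LowerSemicontinuousAt g xs) {u v w : ι → E} {lam : ι → ℝ}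
    (hstep : ∀ᶠ i in l, ∀ z,
      lam i * (g (v i) - g z) ≤ ⟪v i - u i + lam i • F (w i), z - v i⟫)
    (hu : Tendsto u l (𝓝 xs)) (hw : Tendsto w l (𝓝 xs))
    (hdiff : Tendsto (fun i => v i - u i) l (𝓝 0))
    {c : ℝ} (hc : 0 < c) (hlam : ∀ᶠ i in l, c ≤ lam i) :
    ∀ z, g xs - g z ≤ ⟪F xs, z - xs⟫ := by
  have hv : Tendsto v l (𝓝 xs) := by simpa using hdiff.add hu
  have hsub : ∀ᶠ i in l,
      IsSubgradientAt g (-((lam i)⁻¹ • (v i - u i) + F (w i))) (v i) := by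
    filter_upwards [hstep, hlam] with i hi hci
    have hpos : 0 < lam i := hc.trans_le hci
    rw [← inv_smul_smul₀ hpos.ne' (F (w i)), ← smul_add]
    exact (isSubgradientAt_neg_inv_smul_iff hpos).2 hi
  have hlim : Tendsto (fun i => -((lam i)⁻¹ • (v i - u i) + F (w i))) l (𝓝 (-F xs)) := by
    have hquot : Tendsto (fun i => (lam i)⁻¹ • (v i - u i)) l (𝓝 0) :=
      tendsto_inv_smul_zero_of_eventually_le_norm hc
        (hlam.mono fun _ hi => hi.trans (Real.le_norm_self _)) hdiff
    simpa using (hquot.add (hF.tendsto.comp hw)).neg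
  exact isSubgradientAt_neg_iff.1 (isSubgradientAt_of_tendsto hg hlim hv hsub)

/-- Cluster points of the iterates along a subsequence with stepsizes bounded
away from zero solve the variational inequality. -/
theorem cluster_point_solves_vi
    {E : Type*} [NormedAddCommGroup E] [InnerProductSpace ℝ E] [FiniteDimensional ℝ E]
    (F : E → E) (hF : Continuous F) (g : E → ℝ) (hg : ConvexOn ℝ Set.univ g)
    (x y : ℕ → E) (lam : ℕ → ℝ) (hlam : ∀ n, 0 < lam n)
    (h : ∀ n : ℕ, ∀ z : E,
      lam n * (g (x (n + 1)) - g z) ≤ ⟪x (n + 1) - x n + lam n • F (y n), z - x (n + 1)⟫)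
    (nk : ℕ → ℕ) (hnk : StrictMono nk) (xs : E)
    (hx : Filter.Tendsto (fun k => x (nk k)) Filter.atTop (nhds xs))
    (hy : Filter.Tendsto (fun k => y (nk k)) Filter.atTop (nhds xs))
    (hdiff : Filter.Tendsto (fun k => ‖x (nk k + 1) - x (nk k)‖) Filter.atTop (nhds 0))
    (c : ℝ) (hc : 0 < c) (hsep : ∀ k, c ≤ lam (nk k)) :
    ∀ z : E, g xs - g z ≤ ⟪F xs, z - xs⟫ :=
  cluster_point_solves_vi_general hF.continuousAt
    (hg.locallyLipschitz.continuous.lowerSemicontinuous xs) (.of_forall fun k => h (nk k)) hx hy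
    (tendsto_zero_iff_norm_tendsto_zero.2 hdiff) hc (.of_forall hsep)
end

section
/- Let f : E → ℝ be convex, α ∈ (0, √2 − 1], N ≥ 1, and let (x_n)_{0≤n≤N+1}, (y_n)_{0≤n≤N} be points of E and (λ_n)_{1≤n≤N} positive reals such that for every 1 ≤ n ≤ N and every x ∈ E: λ_n·(f(y_n) − f(x)) ≤ (1/2)·‖x_n − x‖² − (1/2)·‖x_{n+1} − x‖² − ((1 − √2·α)/2)·‖x_{n+1} − y_n‖² + (α/2)·‖x_n − y_{n−1}‖². Set S_N = Σ_{n=1}^N λ_n and ŷ_N = (Σ_{n=1}^N λ_n·y_n)/S_N. Then for every x ∈ E: f(ŷ_N) − f(x) ≤ (‖x_1 − x‖² + α·‖x_1 − y_0‖²) / (2·S_N). -/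
/-!
The bound `α ≤ √2 - 1` says exactly that `α ≤ 1 - √2 * α`: the term in `‖x (n + 1) - y n‖ ^ 2`
gained at step `n` absorbs the one paid at step `n + 1`. Hence
`(‖x n - z‖ ^ 2 + α * ‖x n - y (n - 1)‖ ^ 2) / 2` is a Lyapunov function whose decrease controls
`lam n * (f (y n) - f z)`. Telescoping bounds the weighted sum of these gaps, and Jensen's
inequality transfers the bound to the averaged iterate.
-/

open Finset

theorem sum_Icc_le_sub_of_forall_le_sub {G : Type*} [AddCommGroup G] [PartialOrder G]
    [IsOrderedAddMonoid G] {a V : ℕ → G} {m n : ℕ} (hmn : m ≤ n + 1)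
    (h : ∀ k ∈ Icc m n, a k ≤ V k - V (k + 1)) :
    ∑ k ∈ Icc m n, a k ≤ V m - V (n + 1) := by
  calc ∑ k ∈ Icc m n, a k
      ≤ ∑ k ∈ Icc m n, (V k - V (k + 1)) := sum_le_sum h
    _ = -∑ k ∈ Ico m (n + 1), (V (k + 1) - V k) := by
      simp only [← sum_neg_distrib, neg_sub, Ico_add_one_right_eq_Icc]
    _ = V m - V (n + 1) := by rw [sum_Ico_sub V hmn, neg_sub]

section Jensen

variable {𝕜 E : Type*} [Field 𝕜] [LinearOrder 𝕜] [IsStrictOrderedRing 𝕜] [AddCommGroup E]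
  [Module 𝕜 E] {s : Set E} {f : E → 𝕜}

theorem map_centerMass_sub_le_div_of_sum_le {ι : Type*} {t : Finset ι} {w : ι → 𝕜} {p : ι → E}
    (hf : ConvexOn 𝕜 s f) (hw : ∀ i ∈ t, 0 ≤ w i) (hw_sum : 0 < ∑ i ∈ t, w i)
    (hp : ∀ i ∈ t, p i ∈ s) {c B : 𝕜} (hB : ∑ i ∈ t, w i * (f (p i) - c) ≤ B) :
    f (t.centerMass w p) - c ≤ B / ∑ i ∈ t, w i := by
  have jensen : f (t.centerMass w p) - c ≤ t.centerMass w fun i ↦ f (p i) - c := by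
    simpa only [sub_eq_add_neg] using! (hf.add_const (-c)).map_centerMass_le hw hw_sum hp
  calc f (t.centerMass w p) - c
      ≤ (∑ i ∈ t, w i * (f (p i) - c)) / ∑ i ∈ t, w i := by
        simpa only [centerMass, smul_eq_mul, inv_mul_eq_div] using jensen
    _ ≤ B / ∑ i ∈ t, w i := by gcongr

theorem map_centerMass_Icc_sub_le_div_of_forall_le_sub {w V : ℕ → 𝕜} {p : ℕ → E} {m n : ℕ}
    (hf : ConvexOn 𝕜 s f) (hw : ∀ k ∈ Icc m n, 0 ≤ w k) (hw_sum : 0 < ∑ k ∈ Icc m n, w k)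
    (hp : ∀ k ∈ Icc m n, p k ∈ s) {c : 𝕜}
    (hdescent : ∀ k ∈ Icc m n, w k * (f (p k) - c) ≤ V k - V (k + 1)) (hV : 0 ≤ V (n + 1)) :
    f ((Icc m n).centerMass w p) - c ≤ V m / ∑ k ∈ Icc m n, w k := by
  have hmn : m ≤ n := nonempty_Icc.1 (nonempty_of_sum_ne_zero hw_sum.ne')
  refine map_centerMass_sub_le_div_of_sum_le hf hw hw_sum hp ?_
  exact (sum_Icc_le_sub_of_forall_le_sub (by lia) hdescent).trans (sub_le_self _ hV)

end Jensen

section Potential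

variable {E : Type*} [SeminormedAddGroup E] {α β : ℝ} {x y : ℕ → E} {z : E}

/-- The Lyapunov function of the iteration with reference point `z`. It is meant for `1 ≤ n`: at
`n = 0` the truncated subtraction reads `y (n - 1)` as `y 0`. -/
noncomputable def ergodicPotential (α : ℝ) (x y : ℕ → E) (z : E) (n : ℕ) : ℝ :=
  (‖x n - z‖ ^ 2 + α * ‖x n - y (n - 1)‖ ^ 2) / 2

theorem ergodicPotential_nonneg (hα : 0 ≤ α) (n : ℕ) : 0 ≤ ergodicPotential α x y z n := by
  unfold ergodicPotential
  positivity

theorem le_ergodicPotential_sub_of_le (hαβ : α ≤ β) {a : ℝ} {n : ℕ}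
    (ha : a ≤ (1 / 2) * ‖x n - z‖ ^ 2 - (1 / 2) * ‖x (n + 1) - z‖ ^ 2
      - (β / 2) * ‖x (n + 1) - y n‖ ^ 2 + (α / 2) * ‖x n - y (n - 1)‖ ^ 2) :
    a ≤ ergodicPotential α x y z n - ergodicPotential α x y z (n + 1) := by
  have hcoeff : α * ‖x (n + 1) - y n‖ ^ 2 ≤ β * ‖x (n + 1) - y n‖ ^ 2 := by gcongr
  simp only [ergodicPotential, Nat.add_sub_cancel]
  linarith

end Potential

theorem le_one_sub_sqrt_two_mul_iff {α : ℝ} : α ≤ 1 - √2 * α ↔ α ≤ √2 - 1 := by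
  have hinv : (√2 - 1) * (1 + √2) = 1 := by
    linear_combination Real.sq_sqrt zero_le_two
  calc α ≤ 1 - √2 * α
      ↔ α * (1 + √2) ≤ (√2 - 1) * (1 + √2) := by
        rw [hinv, le_sub_iff_add_le, mul_add, mul_one, mul_comm α]
    _ ↔ α ≤ √2 - 1 := mul_le_mul_iff_of_pos_right (by positivity)

theorem ergodic_rate_minimization_general {E : Type*} [SeminormedAddCommGroup E] [Module ℝ E]
    {C : Set E} {f : E → ℝ} (hf : ConvexOn ℝ C f) {α β : ℝ} (hα : 0 ≤ α) (hαβ : α ≤ β)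
    {N : ℕ} {x y : ℕ → E} {lam : ℕ → ℝ} (hlam : ∀ n ∈ Icc 1 N, 0 ≤ lam n)
    (hlam_sum : 0 < ∑ n ∈ Icc 1 N, lam n) (hy : ∀ n ∈ Icc 1 N, y n ∈ C) {z : E}
    (hkey : ∀ n ∈ Icc 1 N, lam n * (f (y n) - f z) ≤
      (1 / 2) * ‖x n - z‖ ^ 2 - (1 / 2) * ‖x (n + 1) - z‖ ^ 2
        - (β / 2) * ‖x (n + 1) - y n‖ ^ 2 + (α / 2) * ‖x n - y (n - 1)‖ ^ 2) :
    f ((Icc 1 N).centerMass lam y) - f z ≤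
      (‖x 1 - z‖ ^ 2 + α * ‖x 1 - y 0‖ ^ 2) / (2 * ∑ n ∈ Icc 1 N, lam n) := by
  rw [← div_div]
  exact map_centerMass_Icc_sub_le_div_of_forall_le_sub (V := ergodicPotential α x y z) hf hlam
    hlam_sum hy (fun n hn ↦ le_ergodicPotential_sub_of_le hαβ (hkey n hn))
    (ergodicPotential_nonneg hα (N + 1))

/-- Ergodic rate of convergence for constrained minimization. -/
theorem ergodic_rate_minimization
    {E : Type*} [NormedAddCommGroup E] [InnerProductSpace ℝ E] [FiniteDimensional ℝ E]
    (f : E → ℝ) (hf : ConvexOn ℝ Set.univ f)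
    (α : ℝ) (hα : α ∈ Set.Ioc 0 (Real.sqrt 2 - 1))
    (N : ℕ) (hN : 1 ≤ N)
    (x y : ℕ → E) (lam : ℕ → ℝ)
    (hlam : ∀ n, 1 ≤ n → n ≤ N → 0 < lam n)
    (hkey : ∀ n, 1 ≤ n → n ≤ N → ∀ z : E,
      lam n * (f (y n) - f z) ≤
        (1 / 2) * ‖x n - z‖ ^ 2 - (1 / 2) * ‖x (n + 1) - z‖ ^ 2
          - ((1 - Real.sqrt 2 * α) / 2) * ‖x (n + 1) - y n‖ ^ 2
          + (α / 2) * ‖x n - y (n - 1)‖ ^ 2) :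
    ∀ z : E,
      f ((∑ n ∈ Finset.Icc 1 N, lam n)⁻¹ • ∑ n ∈ Finset.Icc 1 N, lam n • y n) - f z ≤
        (‖x 1 - z‖ ^ 2 + α * ‖x 1 - y 0‖ ^ 2) / (2 * ∑ n ∈ Finset.Icc 1 N, lam n) := by
  have hpos : ∀ n ∈ Icc 1 N, 0 < lam n := by simpa only [mem_Icc, and_imp] using hlam
  exact fun z ↦ ergodic_rate_minimization_general hf hα.1.le (le_one_sub_sqrt_two_mul_iff.2 hα.2)
    (fun n hn ↦ (hpos n hn).le) (sum_pos hpos (nonempty_Icc.2 hN)) (fun _ _ ↦ Set.mem_univ _)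
    fun n hn ↦ hkey n (mem_Icc.1 hn).1 (mem_Icc.1 hn).2 z
end
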